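/- arXiv:2307.13744 — 6 statements merged into one kernel-verified Lean document; each statement's English description precedes it below -/
import Mathlib

section
/- Let L(θ) = L_0 + g_0ᵀ(θ−θ_0) + (1/2)(θ−θ_0)ᵀB(θ−θ_0) be a quadratic function on ℝ^d with B a symmetric d×d real matrix, so that its gradient is g(θ) = g_0 + B(θ−θ_0). Let (θ_t)_{t≥0} be any sequence of points, let g_t = g(θ_t), and let β ∈ [0,1). Define the momentum sequences Mθ_0 = θ_0, Mg_0 = g_0, Mθ_t = β·Mθ_{t−1} + (1−β)·θ_t, and Mg_t = β·Mg_{t−1} + (1−β)·g_t. Then for every integer T ≥ 1 and every k ≥ 0, the pairs s_k = Mθ_{(k+1)T} − Mθ_{kT} and y_k = Mg_{(k+1)T} − Mg_{kT} satisfy the exact secant relation y_k = B·s_k; i.e., in the noise-free case the momentum-based scheme produces the same secant pairs relation (and hence the same Hessian approximation) as vanilla L-BFGS. -/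
/-- for a quadratic loss, the momentum-based secant pairs satisfy the exact
secant relation `y_k = B s_k`, just as in vanilla L-BFGS. -/
theorem momentum_secant_pairs_exact
    (d : ℕ) (B : Matrix (Fin d) (Fin d) ℝ) (hB : B.IsSymm)
    (θ0 g0 : Fin d → ℝ)
    (g : (Fin d → ℝ) → (Fin d → ℝ)) (hg : ∀ x, g x = g0 + B.mulVec (x - θ0))
    (θ : ℕ → Fin d → ℝ) (hθ0 : θ 0 = θ0)
    (β : ℝ) (hβ : β ∈ Set.Ico (0 : ℝ) 1)
    (Mθ Mg : ℕ → Fin d → ℝ)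
    (hMθ0 : Mθ 0 = θ 0) (hMg0 : Mg 0 = g (θ 0))
    (hMθ : ∀ t : ℕ, Mθ (t + 1) = β • Mθ t + (1 - β) • θ (t + 1))
    (hMg : ∀ t : ℕ, Mg (t + 1) = β • Mg t + (1 - β) • g (θ (t + 1)))
    (T : ℕ) (hT : 1 ≤ T) (k : ℕ) :
    Mg ((k + 1) * T) - Mg (k * T) = B.mulVec (Mθ ((k + 1) * T) - Mθ (k * T)) := by
  have key : ∀ t, Mg t = g (Mθ t) := by
    intro t
    induction t with
    | zero => rw [hMg0, hMθ0]
    | succ t ih =>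
      rw [hMg, ih, hMθ, hg, hg, hg]
      simp only [Matrix.mulVec_sub, Matrix.mulVec_add, Matrix.mulVec_smul]
      module
  rw [key, key, hg, hg]
  simp only [Matrix.mulVec_sub]
  abel
end

section
/- Let B be a symmetric d×d real matrix with λI ⪯ B ⪯ ΛI where Λ ≥ λ > 0, and let L(θ) = (1/2)(θ−θ*)ᵀB(θ−θ*) be the quadratic loss with minimum value 0 at θ*. Fix ε > 0 and α > 2. Suppose θ_t ∈ ℝ^d with s = θ* − θ_t ≠ 0, and suppose the noisy gradient change y satisfies ‖y − B·s‖ ≤ 2ε (noise bound) and the curvature condition ⟨s, y⟩ ≥ α·ε·‖s‖. Then L(θ_t) ≥ ((α−2)²·λ / (2Λ²))·ε². In other words, the achievable loss of noisy L-BFGS is lower bounded by a value proportional to the noise level ε². -/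
open RealInnerProductSpace

/-- lower bound on the achievable loss of noisy L-BFGS on a quadratic. -/
theorem noisy_lbfgs_loss_lower_bound
    (d : ℕ) (hd : 1 ≤ d) (B : Matrix (Fin d) (Fin d) ℝ) (hB : B.IsSymm)
    (lam Lam : ℝ) (hlam : 0 < lam) (hlamLam : lam ≤ Lam)
    (hlow : ∀ x : EuclideanSpace ℝ (Fin d), lam * ‖x‖ ^ 2 ≤ ⟪x, B.toEuclideanLin x⟫)
    (hup : ∀ x : EuclideanSpace ℝ (Fin d), ⟪x, B.toEuclideanLin x⟫ ≤ Lam * ‖x‖ ^ 2)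
    (θstar θt : EuclideanSpace ℝ (Fin d))
    (ε α : ℝ) (hε : 0 < ε) (hα : 2 < α)
    (s y : EuclideanSpace ℝ (Fin d)) (hs : s = θstar - θt) (hs0 : s ≠ 0)
    (hnoise : ‖y - B.toEuclideanLin s‖ ≤ 2 * ε)
    (hcurv : α * ε * ‖s‖ ≤ ⟪s, y⟫) :
    ((α - 2) ^ 2 * lam / (2 * Lam ^ 2)) * ε ^ 2 ≤
      (1 / 2) * ⟪θt - θstar, B.toEuclideanLin (θt - θstar)⟫ := by
  have hn : 0 < ‖s‖ := norm_pos_iff.mpr hs0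
  have hL : 0 < Lam := lt_of_lt_of_le hlam hlamLam
  have h1 : ⟪s, y - B.toEuclideanLin s⟫ ≤ ‖s‖ * (2 * ε) :=
    (real_inner_le_norm _ _).trans (mul_le_mul_of_nonneg_left hnoise hn.le)
  rw [inner_sub_right] at h1
  have h2 := hup s
  have h3 : (α - 2) * ε ≤ Lam * ‖s‖ := by
    refine le_of_mul_le_mul_right ?_ hn
    nlinarith
  have h4 : ((α - 2) * ε) ^ 2 ≤ (Lam * ‖s‖) ^ 2 :=
    pow_le_pow_left₀ (mul_nonneg (by linarith) hε.le) h3 2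
  have h5 := hlow (θt - θstar)
  have h6 : ‖θt - θstar‖ = ‖s‖ := by rw [hs, norm_sub_rev]
  rw [h6] at h5
  have h7 : ((α - 2) ^ 2 * lam / (2 * Lam ^ 2)) * ε ^ 2 ≤ (1 / 2) * (lam * ‖s‖ ^ 2) := by
    rw [div_mul_eq_mul_div, div_le_iff₀ (by positivity)]
    nlinarith [mul_le_mul_of_nonneg_left h4 hlam.le]
  linarith
end

section
/- Let s, v, y ∈ ℝ^d with s ≠ 0, let λ > 0, ε > 0, and α > 0. Assume ⟨s, v⟩ ≥ λ‖s‖² (curvature lower bound from λI ⪯ B with v = Bs), ‖y − v‖ ≤ 2ε (noise bound), and ⟨s, y⟩ ≥ α·ε·‖s‖. Then ⟨s, y⟩ / ‖s‖² ≥ (α/(α+2))·λ. -/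
open RealInnerProductSpace

/-- lower bound on the estimated curvature along `s` under gradient noise. -/
theorem noisy_curvature_lower_bound
    (d : ℕ) (hd : 1 ≤ d) (s v y : EuclideanSpace ℝ (Fin d)) (hs : s ≠ 0)
    (lam ε α : ℝ) (hlam : 0 < lam) (hε : 0 < ε) (hα : 0 < α)
    (hcurv : lam * ‖s‖ ^ 2 ≤ ⟪s, v⟫)
    (hnoise : ‖y - v‖ ≤ 2 * ε)
    (hsy : α * ε * ‖s‖ ≤ ⟪s, y⟫) :
    (α / (α + 2)) * lam ≤ ⟪s, y⟫ / ‖s‖ ^ 2 := by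
  have hn : 0 < ‖s‖ := norm_pos_iff.mpr hs
  have h1 : ⟪s, v - y⟫ ≤ ‖s‖ * ‖v - y‖ := real_inner_le_norm s (v - y)
  rw [inner_sub_right, norm_sub_rev v y] at h1
  have h2 : ‖s‖ * ‖y - v‖ ≤ ‖s‖ * (2 * ε) := mul_le_mul_of_nonneg_left hnoise hn.le
  have h3 : α * (lam * ‖s‖ ^ 2) ≤ α * (⟪s, y⟫ + ‖s‖ * (2 * ε)) :=
    mul_le_mul_of_nonneg_left (by linarith) hα.le
  rw [div_mul_eq_mul_div, div_le_div_iff₀ (by positivity) (by positivity)]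
  nlinarith
end

section
/- Let B be a symmetric d×d real matrix with B ⪯ ΛI for some Λ > 0, let s ∈ ℝ^d with s ≠ 0, let ε > 0 and α > 2, and let y ∈ ℝ^d satisfy ‖y − B·s‖ ≤ 2ε and ⟨s, y⟩ ≥ α·ε·‖s‖. Then ‖s‖ ≥ ((α−2)/Λ)·ε. -/
open RealInnerProductSpace

/-- lower bound on the step norm `‖s‖` under the curvature-pair selection rule. -/
theorem noisy_lbfgs_step_norm_lower_bound
    (d : ℕ) (hd : 1 ≤ d) (B : Matrix (Fin d) (Fin d) ℝ) (hB : B.IsSymm)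
    (Lam : ℝ) (hLam : 0 < Lam)
    (hup : ∀ x : EuclideanSpace ℝ (Fin d), ⟪x, B.toEuclideanLin x⟫ ≤ Lam * ‖x‖ ^ 2)
    (s y : EuclideanSpace ℝ (Fin d)) (hs : s ≠ 0)
    (ε α : ℝ) (hε : 0 < ε) (hα : 2 < α)
    (hnoise : ‖y - B.toEuclideanLin s‖ ≤ 2 * ε)
    (hsy : α * ε * ‖s‖ ≤ ⟪s, y⟫) :
    ((α - 2) / Lam) * ε ≤ ‖s‖ := by
  have hpos : 0 < ‖s‖ := norm_pos_iff.mpr hs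
  have h1 := real_inner_le_norm s (y - B.toEuclideanLin s)
  rw [inner_sub_right] at h1
  have h2 := hup s
  have h3 : ‖s‖ * ‖y - B.toEuclideanLin s‖ ≤ ‖s‖ * (2 * ε) :=
    mul_le_mul_of_nonneg_left hnoise hpos.le
  have h4 : ((α - 2) * ε) * ‖s‖ ≤ (‖s‖ * Lam) * ‖s‖ := by linarith
  have h5 := le_of_mul_le_mul_right h4 hpos
  rw [div_mul_eq_mul_div, div_le_iff₀ hLam]
  exact h5
end

section
/- Let B be a symmetric d×d real matrix with λI ⪯ B ⪯ ΛI where Λ ≥ λ > 0, let s ∈ ℝ^d with s ≠ 0, let ε > 0 and α > 2, and let y ∈ ℝ^d satisfy ‖y − B·s‖ ≤ 2ε and ⟨s, y⟩ ≥ α·ε·‖s‖. Then ‖y‖² / ‖s‖² ≤ ((α/(α−2))·Λ)², i.e., ‖y‖ ≤ (α/(α−2))·Λ·‖s‖. -/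
open RealInnerProductSpace

/-- upper bound on the curvature ratio `‖y‖²/‖s‖²` of a noisy secant pair. -/
theorem noisy_lbfgs_curvature_ratio_upper_bound
    (d : ℕ) (hd : 1 ≤ d) (B : Matrix (Fin d) (Fin d) ℝ) (hB : B.IsSymm)
    (lam Lam : ℝ) (hlam : 0 < lam) (hlamLam : lam ≤ Lam)
    (hlow : ∀ x : EuclideanSpace ℝ (Fin d), lam * ‖x‖ ^ 2 ≤ ⟪x, B.toEuclideanLin x⟫)
    (hup : ∀ x : EuclideanSpace ℝ (Fin d), ⟪x, B.toEuclideanLin x⟫ ≤ Lam * ‖x‖ ^ 2)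
    (s y : EuclideanSpace ℝ (Fin d)) (hs : s ≠ 0)
    (ε α : ℝ) (hε : 0 < ε) (hα : 2 < α)
    (hnoise : ‖y - B.toEuclideanLin s‖ ≤ 2 * ε)
    (hsy : α * ε * ‖s‖ ≤ ⟪s, y⟫) :
    ‖y‖ ^ 2 / ‖s‖ ^ 2 ≤ ((α / (α - 2)) * Lam) ^ 2 ∧ ‖y‖ ≤ (α / (α - 2)) * Lam * ‖s‖ := by
  have hL : 0 < Lam := lt_of_lt_of_le hlam hlamLam
  have hsp : 0 < ‖s‖ := norm_pos_iff.mpr hs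
  have hsym : (B.toEuclideanLin).IsSymmetric := by
    rw [← Matrix.isHermitian_iff_isSymmetric]
    rw [Matrix.IsHermitian, Matrix.conjTranspose_eq_transpose_of_trivial]
    exact hB
  have hBs : ‖B.toEuclideanLin s‖ ≤ Lam * ‖s‖ := by
    have h1 := hlow (Lam • s - B.toEuclideanLin s)
    have h2 := hup (B.toEuclideanLin s)
    have h3 := hup s
    have h4 := hsym s (B.toEuclideanLin s)
    have h0 : 0 ≤ lam * ‖Lam • s - B.toEuclideanLin s‖ ^ 2 := by positivity
    simp only [map_sub, map_smul, inner_sub_left, inner_sub_right, real_inner_smul_left,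
      real_inner_smul_right] at h1
    rw [← h4, real_inner_self_eq_norm_sq] at h1
    have h5 : Lam * ‖B.toEuclideanLin s‖ ^ 2 ≤ Lam * (Lam * ‖s‖) ^ 2 := by
      have := mul_le_mul_of_nonneg_left h3 (sq_nonneg Lam)
      nlinarith
    exact (pow_le_pow_iff_left₀ (norm_nonneg _) (by positivity) two_ne_zero).mp (le_of_mul_le_mul_left h5 hL)
  have hy : α * ε ≤ ‖y‖ := by
    have := real_inner_le_norm s y
    refine le_of_mul_le_mul_right ?_ hsp
    linarith [mul_comm ‖s‖ ‖y‖]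
  have hy2 : ‖y‖ ≤ Lam * ‖s‖ + 2 * ε := by
    have := norm_add_le (y - B.toEuclideanLin s) (B.toEuclideanLin s)
    rw [sub_add_cancel] at this
    linarith
  have ha : 0 < α - 2 := by linarith
  have main : ‖y‖ ≤ (α / (α - 2)) * Lam * ‖s‖ := by
    have : (α / (α - 2)) * Lam * ‖s‖ = (α * (Lam * ‖s‖)) / (α - 2) := by ring
    rw [this, le_div_iff₀ ha]
    nlinarith
  refine ⟨?_, main⟩
  rw [div_le_iff₀ (by positivity), ← mul_pow]
  exact pow_le_pow_left₀ (norm_nonneg _) main 2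
end

section
/- Let 0 < σ_L < 1 < σ_H, 0 < τ_0 < 1, and let s, y ∈ ℝ^d with s ≠ 0. Set μ = ⟨s, y⟩/⟨s, s⟩ and define the damping factor τ by: τ = min((1−σ_L)/(1−μ), τ_0) if μ ≤ σ_L; τ = min((σ_H−1)/(μ−1), τ_0) if μ ≥ σ_H; and τ = τ_0 otherwise. Define the damped gradient change ŷ = τ·y + (1−τ)·s. Then σ_L ≤ ⟨s, ŷ⟩/⟨s, s⟩ ≤ σ_H; i.e., the damped curvature estimate along s is restrained to the interval [σ_L, σ_H], preserving positive definiteness of the Hessian approximation. -/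
open RealInnerProductSpace

/-- adaptive Hessian damping restrains the damped curvature estimate
to the interval `[σ_L, σ_H]`. -/
theorem damped_curvature_bounded
    (d : ℕ) (σL σH τ0 : ℝ) (hσL0 : 0 < σL) (hσL1 : σL < 1) (hσH : 1 < σH)
    (hτ00 : 0 < τ0) (hτ01 : τ0 < 1)
    (s y : EuclideanSpace ℝ (Fin d)) (hs : s ≠ 0)
    (μ τ : ℝ) (hμ : μ = ⟪s, y⟫ / ⟪s, s⟫)
    (hτ : τ = if μ ≤ σL then min ((1 - σL) / (1 - μ)) τ0
              else if σH ≤ μ then min ((σH - 1) / (μ - 1)) τ0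
              else τ0)
    (yhat : EuclideanSpace ℝ (Fin d)) (hyhat : yhat = τ • y + (1 - τ) • s) :
    σL ≤ ⟪s, yhat⟫ / ⟪s, s⟫ ∧ ⟪s, yhat⟫ / ⟪s, s⟫ ≤ σH := by
  have hss : (⟪s, s⟫ : ℝ) ≠ 0 := inner_self_ne_zero.mpr hs
  have key : ⟪s, yhat⟫ / ⟪s, s⟫ = τ * μ + (1 - τ) := by
    rw [hyhat, inner_add_right, real_inner_smul_right, real_inner_smul_right, hμ]
    field_simp
  rw [key]
  clear key hyhat hμ
  split_ifs at hτ with h1 h2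
  · have hp : 0 < 1 - μ := by linarith
    have ha : τ ≤ (1 - σL) / (1 - μ) := hτ ▸ min_le_left _ _
    have h0 : 0 ≤ τ := by
      rw [hτ]
      exact le_min (div_nonneg (by linarith) hp.le) hτ00.le
    rw [le_div_iff₀ hp] at ha
    have := mul_nonneg h0 hp.le
    constructor <;> nlinarith
  · have hp : 0 < μ - 1 := by linarith
    have ha : τ ≤ (σH - 1) / (μ - 1) := hτ ▸ min_le_left _ _
    have h0 : 0 ≤ τ := by
      rw [hτ]
      exact le_min (div_nonneg (by linarith) hp.le) hτ00.le
    rw [le_div_iff₀ hp] at ha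
    have := mul_nonneg h0 hp.le
    constructor <;> nlinarith
  · push Not at h1 h2
    subst hτ
    have e1 := mul_pos hτ00 (sub_pos.mpr h1)
    have e2 := mul_pos hτ00 (sub_pos.mpr h2)
    have e3 := mul_pos (sub_pos.mpr hτ01) (sub_pos.mpr hσL1)
    have e4 := mul_pos (sub_pos.mpr hτ01) (sub_pos.mpr hσH)
    constructor <;> nlinarith
end
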